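/- In M₄(ℂ), let Q₀ := e₀₀ ⊗ e₀₀ (the diagonal matrix diag(1,0,0,0)), Q₁ := e₁₁ ⊗ e₁₁ (diag(0,0,0,1)), P^⊥ := I₄ − Q₀ − Q₁, and ρ₀ := ½ (Q₀ + Q₁). Define E(X) := Tr(Q₀ X) Q₀ + Tr(Q₁ X) Q₁ + Tr(P^⊥ X) ρ₀. Then E is a quantum channel (completely positive, i.e. its Choi matrix is positive semidefinite, and trace-preserving), and its fixed-point space is exactly the two-dimensional span of Q₀ and Q₁: E(X) = X if and only if X = c₁ Q₀ + c₂ Q₁ for some c₁, c₂ ∈ ℂ. -/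

import Mathlib

open Matrix Kronecker
open scoped ComplexOrder

/-- The Choi matrix of a linear map on matrices indexed by `I`. -/
noncomputable def ChoiMatrix {I : Type*} [Fintype I] [DecidableEq I]
    (E : Matrix I I ℂ →ₗ[ℂ] Matrix I I ℂ) : Matrix (I × I) (I × I) ℂ :=
  ∑ i : I, ∑ j : I, (E (Matrix.single i j 1)) ⊗ₖ (Matrix.single i j 1)

noncomputable def e00 : Matrix (Fin 2) (Fin 2) ℂ := !![1, 0; 0, 0]

noncomputable def e11 : Matrix (Fin 2) (Fin 2) ℂ := !![0, 0; 0, 1]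

/-- `Q₀ = e₀₀ ⊗ e₀₀`. -/
noncomputable def Q0 : Matrix (Fin 2 × Fin 2) (Fin 2 × Fin 2) ℂ := e00 ⊗ₖ e00

/-- `Q₁ = e₁₁ ⊗ e₁₁`. -/
noncomputable def Q1 : Matrix (Fin 2 × Fin 2) (Fin 2 × Fin 2) ℂ := e11 ⊗ₖ e11

/-- `P^⊥ = I₄ - Q₀ - Q₁`. -/
noncomputable def Pperp : Matrix (Fin 2 × Fin 2) (Fin 2 × Fin 2) ℂ := 1 - Q0 - Q1

/-- `ρ₀ = ½ (Q₀ + Q₁)`. -/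
noncomputable def ρ0 : Matrix (Fin 2 × Fin 2) (Fin 2 × Fin 2) ℂ := (2 : ℂ)⁻¹ • (Q0 + Q1)

/-!
The channel measures the effects `Q₀, Q₁, P^⊥` and prepares `Q₀, Q₁, ρ₀` accordingly. A map of this
kind has Choi matrix `∑ k, σ k ⊗ (M k)ᵀ`, which is positive semidefinite because the effects and the
states are. Its range lies in the span of the prepared states, here `span {Q₀, Q₁}`, so every fixed
point does too; conversely `Q₀` and `Q₁` are fixed since the effects are mutually orthogonal
projections and `Tr Q₀ = Tr Q₁ = 1`.
-/

section Choi

variable {I : Type*} [Fintype I] [DecidableEq I]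

lemma choiMatrix_apply (E : Matrix I I ℂ →ₗ[ℂ] Matrix I I ℂ) (p q : I × I) :
    ChoiMatrix E p q = E (single p.2 q.2 1) p.1 q.1 := by
  simp [ChoiMatrix, Matrix.sum_apply, single_apply, ite_and]

end Choi

section MeasurePrepare

variable {R κ m n : Type*} [CommSemiring R] [Fintype κ] [Fintype m]

/-- The measure-and-prepare (Holevo form) map `X ↦ ∑ k, Tr(M k * X) • σ k`: measure with effects
`M k`, and prepare the state `σ k` on outcome `k`. No positivity or normalization is built in. -/
def measurePrepare (M : κ → Matrix m m R) (σ : κ → Matrix n n R) :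
    Matrix m m R →ₗ[R] Matrix n n R :=
  ∑ k, (traceLinearMap m R R ∘ₗ LinearMap.mulLeft R (M k)).smulRight (σ k)

lemma measurePrepare_apply (M : κ → Matrix m m R) (σ : κ → Matrix n n R) (X : Matrix m m R) :
    measurePrepare M σ X = ∑ k, (M k * X).trace • σ k := by
  simp [measurePrepare]

lemma trace_measurePrepare [DecidableEq m] [Fintype n] {M : κ → Matrix m m R}
    {σ : κ → Matrix n n R} (hM : ∑ k, M k = 1) (hσ : ∀ k, (σ k).trace = 1) (X : Matrix m m R) :
    (measurePrepare M σ X).trace = X.trace := by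
  calc (measurePrepare M σ X).trace = ∑ k, (M k * X).trace := by
        simp [measurePrepare_apply, trace_sum, hσ]
    _ = ((∑ k, M k) * X).trace := by rw [Finset.sum_mul, trace_sum]
    _ = X.trace := by rw [hM, one_mul]

lemma measurePrepare_eq_self_iff_mem_span {M σ : κ → Matrix m m R} {S : Set (Matrix m m R)}
    (hS : ∀ A ∈ S, measurePrepare M σ A = A) (hσ : ∀ k, σ k ∈ Submodule.span R S)
    (X : Matrix m m R) : measurePrepare M σ X = X ↔ X ∈ Submodule.span R S := by
  constructor
  · intro hX
    rw [← hX, measurePrepare_apply]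
    exact Submodule.sum_mem _ fun k _ => Submodule.smul_mem _ _ (hσ k)
  · exact LinearMap.eqOn_span (g := LinearMap.id) hS (x := X)

variable {I : Type*} [Fintype I] [DecidableEq I]

lemma choiMatrix_measurePrepare (M σ : κ → Matrix I I ℂ) :
    ChoiMatrix (measurePrepare M σ) = ∑ k, σ k ⊗ₖ (M k)ᵀ := by
  ext p q
  simp [choiMatrix_apply, measurePrepare_apply, trace_mul_single, Matrix.sum_apply, mul_comm]

lemma posSemidef_choiMatrix_measurePrepare {M σ : κ → Matrix I I ℂ}
    (hM : ∀ k, (M k).PosSemidef) (hσ : ∀ k, (σ k).PosSemidef) :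
    (ChoiMatrix (measurePrepare M σ)).PosSemidef := by
  rw [choiMatrix_measurePrepare]
  exact posSemidef_sum _ fun k _ => (hσ k).kronecker (hM k).transpose

end MeasurePrepare

section StarProjection

variable {R n : Type*} [Fintype n]

lemma isStarProjection_single_one [NonAssocSemiring R] [StarRing R] [DecidableEq n] (i : n) :
    IsStarProjection (single i i (1 : R)) where
  isIdempotentElem := by simp [IsIdempotentElem]
  isSelfAdjoint := by simp [IsSelfAdjoint, star_eq_conjTranspose]

lemma posSemidef_of_isStarProjection [Ring R] [PartialOrder R] [StarRing R] [StarOrderedRing R]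
    {P : Matrix n n R} (hP : IsStarProjection P) : P.PosSemidef := by
  have hfactor : Pᴴ * P = P := by
    rw [← star_eq_conjTranspose, hP.isSelfAdjoint.star_eq, hP.isIdempotentElem.eq]
  exact hfactor ▸ posSemidef_conjTranspose_mul_self P

end StarProjection

lemma Q0_eq_single : Q0 = single (0, 0) (0, 0) 1 := by
  have he00 : e00 = single 0 0 1 := by
    ext i j; fin_cases i <;> fin_cases j <;> simp [e00]
  rw [Q0, he00, single_kronecker_single, mul_one]

lemma Q1_eq_single : Q1 = single (1, 1) (1, 1) 1 := by
  have he11 : e11 = single 1 1 1 := by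
    ext i j; fin_cases i <;> fin_cases j <;> simp [e11]
  rw [Q1, he11, single_kronecker_single, mul_one]

lemma isStarProjection_Q0 : IsStarProjection Q0 :=
  Q0_eq_single ▸ isStarProjection_single_one _

lemma isStarProjection_Q1 : IsStarProjection Q1 :=
  Q1_eq_single ▸ isStarProjection_single_one _

lemma Q0_mul_Q1 : Q0 * Q1 = 0 := by
  rw [Q0_eq_single, Q1_eq_single]
  exact single_mul_single_of_ne _ _ _ _ (by decide) _

lemma Q1_mul_Q0 : Q1 * Q0 = 0 := by
  rw [Q0_eq_single, Q1_eq_single]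
  exact single_mul_single_of_ne _ _ _ _ (by decide) _

lemma isStarProjection_Pperp : IsStarProjection Pperp := by
  rw [Pperp, sub_sub]
  exact (isStarProjection_Q0.add isStarProjection_Q1 Q0_mul_Q1).one_sub

lemma Pperp_mul_Q0 : Pperp * Q0 = 0 := by
  simp [Pperp, sub_mul, isStarProjection_Q0.isIdempotentElem.eq, Q1_mul_Q0]

lemma Pperp_mul_Q1 : Pperp * Q1 = 0 := by
  simp [Pperp, sub_mul, isStarProjection_Q1.isIdempotentElem.eq, Q0_mul_Q1]

lemma trace_Q0 : Q0.trace = 1 := by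
  rw [Q0_eq_single, trace_single_eq_same]

lemma trace_Q1 : Q1.trace = 1 := by
  rw [Q1_eq_single, trace_single_eq_same]

/-- The effects measured by the GHZ local channel, one for each of its three outcomes. -/
noncomputable def ghzEffect : Fin 3 → Matrix (Fin 2 × Fin 2) (Fin 2 × Fin 2) ℂ :=
  ![Q0, Q1, Pperp]

/-- The states prepared by the GHZ local channel, indexed by the outcomes of `ghzEffect`, so that
the channel is `measurePrepare ghzEffect ghzState`. -/
noncomputable def ghzState : Fin 3 → Matrix (Fin 2 × Fin 2) (Fin 2 × Fin 2) ℂ :=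
  ![Q0, Q1, ρ0]

lemma sum_ghzEffect : ∑ k, ghzEffect k = 1 := by
  simp [ghzEffect, Fin.sum_univ_three, Pperp]

lemma posSemidef_ghzEffect (k : Fin 3) : (ghzEffect k).PosSemidef := by
  apply posSemidef_of_isStarProjection
  fin_cases k
  exacts [isStarProjection_Q0, isStarProjection_Q1, isStarProjection_Pperp]

lemma ghzState_mem_span (k : Fin 3) : ghzState k ∈ Submodule.span ℂ {Q0, Q1} := by
  have hQ0 : Q0 ∈ Submodule.span ℂ {Q0, Q1} := Submodule.mem_span_of_mem (by simp)
  have hQ1 : Q1 ∈ Submodule.span ℂ {Q0, Q1} := Submodule.mem_span_of_mem (by simp)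
  fin_cases k
  exacts [hQ0, hQ1, Submodule.smul_mem _ _ (add_mem hQ0 hQ1)]

lemma trace_ghzState (k : Fin 3) : (ghzState k).trace = 1 := by
  fin_cases k
  · exact trace_Q0
  · exact trace_Q1
  · calc ρ0.trace = (2 : ℂ)⁻¹ * (1 + 1) := by
          simp only [ρ0, trace_smul, trace_add, trace_Q0, trace_Q1, smul_eq_mul]
      _ = 1 := by norm_num

lemma posSemidef_ghzState (k : Fin 3) : (ghzState k).PosSemidef := by
  have hQ0 : Q0.PosSemidef := posSemidef_of_isStarProjection isStarProjection_Q0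
  have hQ1 : Q1.PosSemidef := posSemidef_of_isStarProjection isStarProjection_Q1
  fin_cases k
  exacts [hQ0, hQ1, (hQ0.add hQ1).smul (by positivity)]

lemma measurePrepare_ghz_apply (X : Matrix (Fin 2 × Fin 2) (Fin 2 × Fin 2) ℂ) :
    measurePrepare ghzEffect ghzState X =
      (Q0 * X).trace • Q0 + (Q1 * X).trace • Q1 + (Pperp * X).trace • ρ0 := by
  simp [measurePrepare_apply, Fin.sum_univ_three, ghzEffect, ghzState]

lemma measurePrepare_ghz_Q0 : measurePrepare ghzEffect ghzState Q0 = Q0 := by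
  simp [measurePrepare_ghz_apply, isStarProjection_Q0.isIdempotentElem.eq, Q1_mul_Q0,
    Pperp_mul_Q0, trace_Q0]

lemma measurePrepare_ghz_Q1 : measurePrepare ghzEffect ghzState Q1 = Q1 := by
  simp [measurePrepare_ghz_apply, isStarProjection_Q1.isIdempotentElem.eq, Q0_mul_Q1,
    Pperp_mul_Q1, trace_Q1]

/-- the local channel of the parent Lindbladian of the classical GHZ state:
`E(X) = Tr(Q₀X) Q₀ + Tr(Q₁X) Q₁ + Tr(P^⊥X) ρ₀` is a quantum channel whose fixed-point
space is exactly the span of `Q₀` and `Q₁`. -/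
theorem ghz_local_channel
    (E : Matrix (Fin 2 × Fin 2) (Fin 2 × Fin 2) ℂ →ₗ[ℂ]
      Matrix (Fin 2 × Fin 2) (Fin 2 × Fin 2) ℂ)
    (hE : ∀ X, E X = (Q0 * X).trace • Q0 + (Q1 * X).trace • Q1 + (Pperp * X).trace • ρ0) :
    (ChoiMatrix E).PosSemidef ∧
    (∀ X, (E X).trace = X.trace) ∧
    (∀ X, E X = X ↔ ∃ c₁ c₂ : ℂ, X = c₁ • Q0 + c₂ • Q1) := by
  obtain rfl : E = measurePrepare ghzEffect ghzState :=
    LinearMap.ext fun X => (hE X).trans (measurePrepare_ghz_apply X).symm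
  refine ⟨posSemidef_choiMatrix_measurePrepare posSemidef_ghzEffect posSemidef_ghzState,
    trace_measurePrepare sum_ghzEffect trace_ghzState, fun X => ?_⟩
  have hfixed : ∀ A ∈ ({Q0, Q1} : Set _), measurePrepare ghzEffect ghzState A = A := by
    simp [measurePrepare_ghz_Q0, measurePrepare_ghz_Q1]
  rw [measurePrepare_eq_self_iff_mem_span hfixed ghzState_mem_span, Submodule.mem_span_pair]
  simp only [eq_comm]
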